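/- Let w be a Kreweras word of length 3n. Then σ_{evac(w)} = rc(σ_w^{-1}), where rc denotes reverse-complement, i.e., for every i ∈ {1,…,3n}, σ_{evac(w)}(i) = 3n+1 − σ_w^{-1}(3n+1−i). -/

import Mathlib

/-- The three letters of a Kreweras word. -/
inductive KLetter : Type
  | A | B | C
deriving DecidableEq, Repr

open KLetter

/-- `w` is a Kreweras word of length `3 * n`: it has `n` `A`'s, `n` `B`'s, `n` `C`'s,
and every prefix has at least as many `A`'s as `B`'s and at least as many `A`'s as `C`'s. -/
def IsKrewerasWord (n : ℕ) (w : List KLetter) : Prop :=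
  w.length = 3 * n ∧ w.count A = n ∧ w.count B = n ∧ w.count C = n ∧
  ∀ k : ℕ, (w.take k).count B ≤ (w.take k).count A ∧
           (w.take k).count C ≤ (w.take k).count A

/-- `kiota w` is the smallest index `ι ≥ 1` (1-indexed) such that the prefix of
length `ι` of `w` has equally many `A`'s as `B`'s, or equally many `A`'s as `C`'s
(and `0` if no such index exists). -/
def kiota (w : List KLetter) : ℕ :=
  (((List.range (w.length + 1)).filter fun k =>
      decide (1 ≤ k) &&
      (((w.take k).count A == (w.take k).count B) ||
       ((w.take k).count A == (w.take k).count C))).headD 0)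

/-- Promotion of a Kreweras word:
`pro w = (w₂, …, w_{ι-1}, A, w_{ι+1}, …, w_{3n}, w_ι)` where `ι = kiota w`. -/
def pro (w : List KLetter) : List KLetter :=
  ((w.drop 1).set (kiota w - 2) A) ++ [w.getD (kiota w - 1) A]

/-- The trip permutation `σ_w` of a Kreweras word of length `3 * n`, as a function on
1-indexed positions: `σ_w i` is the unique element of `{1, …, 3n}` congruent to
`kiota (pro^[i-1] w) + i - 1` modulo `3 * n`. -/
def ksigma (n : ℕ) (w : List KLetter) (i : ℕ) : ℕ :=
  (kiota (pro^[i - 1] w) + i - 2) % (3 * n) + 1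

/-- `keps w i` is the letter of `pro^[i-1] w` in (1-indexed) position `kiota (pro^[i-1] w)`. -/
def keps (w : List KLetter) (i : ℕ) : KLetter :=
  (pro^[i - 1] w).getD (kiota (pro^[i - 1] w) - 1) A

/-- The negation swapping `B` and `C` (and fixing `A`). -/
def negL : KLetter → KLetter
  | A => A
  | B => C
  | C => B

open Classical in
/-- The involution `τ_i` on Kreweras words of length `3 * n`: swap the letters in
(1-indexed) positions `i` and `i + 1` if the result is again a Kreweras word,
and otherwise do nothing. -/
noncomputable def tau (n i : ℕ) (w : List KLetter) : List KLetter :=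
  let w' := (w.set (i - 1) (w.getD i A)).set i (w.getD (i - 1) A)
  if IsKrewerasWord n w' then w' else w

/-- `tauDown n j = τ_j ∘ τ_{j-1} ∘ ⋯ ∘ τ_1`. -/
noncomputable def tauDown (n : ℕ) : ℕ → List KLetter → List KLetter
  | 0, w => w
  | j + 1, w => tau n (j + 1) (tauDown n j w)

/-- `evacAux n j = (tauDown n 1) ∘ (tauDown n 2) ∘ ⋯ ∘ (tauDown n j)`. -/
noncomputable def evacAux (n : ℕ) : ℕ → List KLetter → List KLetter
  | 0, w => w
  | j + 1, w => evacAux n j (tauDown n (j + 1) w)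

/-- Evacuation on Kreweras words of length `3 * n`:
`evac = (τ_1) ∘ (τ_2 ∘ τ_1) ∘ ⋯ ∘ (τ_{3n-1} ∘ ⋯ ∘ τ_2 ∘ τ_1)`. -/
noncomputable def evac (n : ℕ) (w : List KLetter) : List KLetter :=
  evacAux n (3 * n - 1) w

/-- `tauAsc n k c = τ_{k+c-1} ∘ ⋯ ∘ τ_{k+1} ∘ τ_k`. -/
noncomputable def tauAsc (n k : ℕ) : ℕ → List KLetter → List KLetter
  | 0, w => w
  | j + 1, w => tau n (k + j) (tauAsc n k j w)

/-- `evacStarAux n j = (tauAsc n 1 (3n-1)) ∘ (tauAsc n 2 (3n-2)) ∘ ⋯ ∘ (tauAsc n j (3n-j))`. -/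
noncomputable def evacStarAux (n : ℕ) : ℕ → List KLetter → List KLetter
  | 0, w => w
  | j + 1, w => evacStarAux n j (tauAsc n (j + 1) (3 * n - (j + 1)) w)

/-- Dual evacuation on Kreweras words of length `3 * n`:
`evac* = (τ_{3n-1} ∘ ⋯ ∘ τ_1) ∘ (τ_{3n-1} ∘ ⋯ ∘ τ_2) ∘ ⋯ ∘ (τ_{3n-1})`. -/
noncomputable def evacStar (n : ℕ) (w : List KLetter) : List KLetter :=
  evacStarAux n (3 * n - 1) w

/-- The three-element "V"-shaped poset: `a < b`, `a < c`, with `b`, `c` incomparable. -/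
inductive VP : Type
  | a | b | c
deriving DecidableEq

instance : PartialOrder VP where
  le x y := x = y ∨ x = VP.a
  le_refl x := Or.inl rfl
  le_trans x y z hxy hyz := by
    rcases hxy with rfl | rfl
    · exact hyz
    · exact Or.inr rfl
  le_antisymm x y hxy hyx := by
    rcases hxy with rfl | rfl
    · rfl
    · rcases hyx with rfl | rfl <;> rfl

/-- The labeling of elements of `V(n) = VP × Fin n` by letters. -/
def vlabel {n : ℕ} (p : VP × Fin n) : KLetter :=
  match p.1 with
  | VP.a => A
  | VP.b => B
  | VP.c => C

/-- `L` is a linear extension of `V(n) = VP × Fin n` (with the product order):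
a list of all elements of `V(n)`, each appearing once, such that `L_i ≤ L_j`
implies `i ≤ j`. -/
def IsLinearExtension (n : ℕ) (L : List (VP × Fin n)) : Prop :=
  L.Nodup ∧ (∀ p : VP × Fin n, p ∈ L) ∧
  ∀ i j : Fin L.length, L.get i ≤ L.get j → (i : ℕ) ≤ (j : ℕ)

/-- A connected Kreweras word: a Kreweras word of length `3 * n` having no proper
nonempty consecutive substring which is itself a Kreweras word. -/
def ConnectedKrewerasWord (n : ℕ) (w : List KLetter) : Prop :=
  IsKrewerasWord n w ∧
  ∀ (u : List KLetter) (m : ℕ), u <:+: w → u ≠ [] → u ≠ w → ¬ IsKrewerasWord m u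

namespace KW

def dx : KLetter → ℤ
  | A => 1
  | B => -1
  | C => 0
def dy : KLetter → ℤ
  | A => 1
  | B => 0
  | C => -1
/-- Height with respect to `B`. -/
def X (l : List KLetter) : ℤ := (l.map dx).sum
/-- Height with respect to `C`. -/
def Y (l : List KLetter) : ℤ := (l.map dy).sum

@[simp] lemma X_nil : X [] = 0 := rfl
@[simp] lemma Y_nil : Y [] = 0 := rfl
@[simp] lemma X_cons (a l) : X (a :: l) = dx a + X l := by simp [X]
@[simp] lemma Y_cons (a l) : Y (a :: l) = dy a + Y l := by simp [Y]
@[simp] lemma X_append (l m) : X (l ++ m) = X l + X m := by simp [X]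
@[simp] lemma Y_append (l m) : Y (l ++ m) = Y l + Y m := by simp [Y]
@[simp] lemma dxA : dx A = 1 := rfl
@[simp] lemma dxB : dx B = -1 := rfl
@[simp] lemma dxC : dx C = 0 := rfl
@[simp] lemma dyA : dy A = 1 := rfl
@[simp] lemma dyB : dy B = 0 := rfl
@[simp] lemma dyC : dy C = -1 := rfl

lemma X_count (l : List KLetter) : X l = (l.count A : ℤ) - l.count B := by
  induction l with
  | nil => simp
  | cons a l ih => cases a <;> simp [ih] <;> ring
lemma Y_count (l : List KLetter) : Y l = (l.count A : ℤ) - l.count C := by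
  induction l with
  | nil => simp
  | cons a l ih => cases a <;> simp [ih] <;> ring
lemma length_count (l : List KLetter) : l.length = l.count A + l.count B + l.count C := by
  induction l with
  | nil => simp
  | cons a l ih => cases a <;> simp [ih] <;> ring

/-- All prefix heights, started at `x`, are nonnegative. -/
def LX : ℤ → List KLetter → Prop
  | x, [] => 0 ≤ x
  | x, a :: l => 0 ≤ x ∧ LX (x + dx a) l
def LY : ℤ → List KLetter → Prop
  | y, [] => 0 ≤ y
  | y, a :: l => 0 ≤ y ∧ LY (y + dy a) l

@[simp] lemma LX_nil (x) : LX x [] ↔ 0 ≤ x := Iff.rfl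
@[simp] lemma LY_nil (x) : LY x [] ↔ 0 ≤ x := Iff.rfl
@[simp] lemma LX_cons (x a l) : LX x (a :: l) ↔ 0 ≤ x ∧ LX (x + dx a) l := Iff.rfl
@[simp] lemma LY_cons (x a l) : LY x (a :: l) ↔ 0 ≤ x ∧ LY (x + dy a) l := Iff.rfl

lemma LX.nonneg {x l} (h : LX x l) : 0 ≤ x := by cases l with
  | nil => exact h
  | cons a l => exact h.1
lemma LY.nonneg {x l} (h : LY x l) : 0 ≤ x := by cases l with
  | nil => exact h
  | cons a l => exact h.1

@[simp] lemma LX_append (x l m) : LX x (l ++ m) ↔ LX x l ∧ LX (x + X l) m := by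
  induction l generalizing x with
  | nil => simp; exact fun h => h.nonneg
  | cons a l ih => simp [ih, and_assoc, add_assoc]
@[simp] lemma LY_append (x l m) : LY x (l ++ m) ↔ LY x l ∧ LY (x + Y l) m := by
  induction l generalizing x with
  | nil => simp; exact fun h => h.nonneg
  | cons a l ih => simp [ih, and_assoc, add_assoc]

lemma LX.mono {x x' l} (h : LX x l) (hx : x ≤ x') : LX x' l := by
  induction l generalizing x x' with
  | nil => simp at *; omega
  | cons a l ih => simp at *; exact ⟨by omega, ih h.2 (by omega)⟩
lemma LY.mono {x x' l} (h : LY x l) (hx : x ≤ x') : LY x' l := by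
  induction l generalizing x x' with
  | nil => simp at *; omega
  | cons a l ih => simp at *; exact ⟨by omega, ih h.2 (by omega)⟩
lemma LX.last {x l} (h : LX x l) : 0 ≤ x + X l := by
  have : LX x (l ++ []) := by simpa using h
  exact ((LX_append _ _ _).1 this).2
lemma LY.last {x l} (h : LY x l) : 0 ≤ x + Y l := by
  have : LY x (l ++ []) := by simpa using h
  exact ((LY_append _ _ _).1 this).2

lemma LX_iff (x l) : LX x l ↔ ∀ k, 0 ≤ x + X (l.take k) := by
  constructor
  · intro h k
    rw [← List.take_append_drop k l] at h
    exact ((LX_append _ _ _).1 h).1.last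
  · intro h
    induction l generalizing x with
    | nil => simpa using h 0
    | cons a l ih =>
      refine ⟨by simpa using h 0, ih _ fun k => ?_⟩
      have := h (k+1)
      simp at this; omega
lemma LY_iff (x l) : LY x l ↔ ∀ k, 0 ≤ x + Y (l.take k) := by
  constructor
  · intro h k
    rw [← List.take_append_drop k l] at h
    exact ((LY_append _ _ _).1 h).1.last
  · intro h
    induction l generalizing x with
    | nil => simpa using h 0
    | cons a l ih =>
      refine ⟨by simpa using h 0, ih _ fun k => ?_⟩
      have := h (k+1)
      simp at this; omega

attribute [grind =] X_nil Y_nil X_cons Y_cons X_append Y_append dxA dxB dxC dyA dyB dyC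
attribute [grind =] LX_nil LY_nil LX_cons LY_cons LX_append LY_append
attribute [grind →] LX.nonneg LY.nonneg LX.last LY.last

@[grind →] lemma LX.mono' {x x' l} (h : LX x l) (h' : ¬ LX x' l) : x' < x := by
  by_contra hh
  exact h' (h.mono (by omega))
@[grind →] lemma LY.mono' {x x' l} (h : LY x l) (h' : ¬ LY x' l) : x' < x := by
  by_contra hh
  exact h' (h.mono (by omega))

/-- Kreweras words, without keeping track of the length. -/
def K (w : List KLetter) : Prop := X w = 0 ∧ Y w = 0 ∧ LX 0 w ∧ LY 0 w

lemma isK_iff (n w) : IsKrewerasWord n w ↔ w.length = 3 * n ∧ K w := by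
  unfold IsKrewerasWord K
  rw [LX_iff, LY_iff, X_count, Y_count]
  have := length_count w
  constructor
  · rintro ⟨h1, h2, h3, h4, h5⟩
    refine ⟨h1, by omega, by omega, fun k => ?_, fun k => ?_⟩
    · rw [X_count]; have := h5 k; omega
    · rw [Y_count]; have := h5 k; omega
  · rintro ⟨h1, h2, h3, h4, h5⟩
    refine ⟨h1, by omega, by omega, by omega, fun k => ?_⟩
    have a := h4 k
    have b := h5 k
    rw [X_count] at a; rw [Y_count] at b; omega

/-- prefix of length `k` lies on a wall -/
def Zr (w : List KLetter) (k : ℕ) : Prop := X (w.take k) = 0 ∨ Y (w.take k) = 0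

lemma kiota_eq {w : List KLetter} {i : ℕ} (h1 : 1 ≤ i) (h2 : i ≤ w.length) (hz : Zr w i)
    (hn : ∀ k, 1 ≤ k → k < i → ¬ Zr w k) : kiota w = i := by
  have key : ∀ k, (decide (1 ≤ k) &&
      (((w.take k).count A == (w.take k).count B) ||
       ((w.take k).count A == (w.take k).count C))) = true ↔ 1 ≤ k ∧ Zr w k := by
    intro k
    simp only [Zr, X_count, Y_count, Bool.and_eq_true, decide_eq_true_eq, Bool.or_eq_true,
      beq_iff_eq]
    omega
  unfold kiota
  have e : w.length + 1 = i + (1 + (w.length - i)) := by omega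
  rw [e, List.range_add, List.filter_append]
  have : List.filter (fun k => decide (1 ≤ k) &&
      (((w.take k).count A == (w.take k).count B) ||
       ((w.take k).count A == (w.take k).count C))) (List.range i) = [] := by
    rw [List.filter_eq_nil_iff]
    intro k hk
    rw [key]
    rintro ⟨a, b⟩
    exact hn k a (by simpa using hk) b
  rw [this, List.range_add]
  simp only [List.range_one, List.map_append, List.map_cons, List.map_nil, List.nil_append,
    List.filter_append, List.filter_cons, add_zero]
  rw [if_pos ((key i).2 ⟨h1, hz⟩)]
  simp

/-- The bump condition. -/
def Hit : KLetter → List KLetter → Prop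
  | A, _ => False
  | B, p => X p = 0
  | C, p => Y p = 0

/-- Promotion bumps the letter b sitting right after the prefix A :: p. -/
structure Bump (p : List KLetter) (b : KLetter) : Prop where
  hx : LX 0 p
  hy : LY 0 p
  hit : Hit b p

lemma Bump.kiota {p b} (h : Bump p b) (q) : kiota (A :: (p ++ b :: q)) = p.length + 2 := by
  apply kiota_eq (by omega) (by simp)
  · have : (A :: (p ++ b :: q)).take (p.length + 2) = A :: p ++ [b] := by
      simp [List.take_append]
    rw [Zr, this]
    have := h.hit
    cases b <;> simp_all [Hit]
  · intro k h1 h2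
    obtain ⟨k, rfl⟩ := Nat.exists_eq_add_of_le' h1
    have : (A :: (p ++ b :: q)).take (k + 1) = A :: p.take k := by
      have : k ≤ p.length := by omega
      simp [List.take_append, Nat.sub_eq_zero_of_le this]
    rw [Zr, this]
    have h3 := (LX_iff _ _).1 h.hx k
    have h4 := (LY_iff _ _).1 h.hy k
    simp
    omega

lemma Bump.pro {p b} (h : Bump p b) (q) : pro (A :: (p ++ b :: q)) = p ++ A :: (q ++ [b]) := by
  unfold _root_.pro
  rw [h.kiota]
  simp

lemma exists_bump {w : List KLetter} (hw : K w) (hne : w ≠ []) :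
    ∃ p b q, w = A :: (p ++ b :: q) ∧ Bump p b := by
  cases w with
  | nil => exact absurd rfl hne
  | cons a w =>
    obtain ⟨h1, h2, h3, h4⟩ := hw
    have ha : a = A := by
      cases a
      · rfl
      · have := h3.2.nonneg; simp at this
      · have := h4.2.nonneg; simp at this
    subst ha
    have gen : ∀ (w p : List KLetter), LX 0 p → LY 0 p → X (p ++ w) < 0 →
        ∃ p' b q, p ++ w = p' ++ b :: q ∧ Bump p' b := by
      intro w
      induction w with
      | nil => intro p hx hy hlt; have := hx.last; simp at *; omega
      | cons b w ih =>
        intro p hx hy hlt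
        by_cases hh : Hit b p
        · exact ⟨p, b, w, rfl, hx, hy, hh⟩
        · have e : p ++ b :: w = (p ++ [b]) ++ w := by simp
          rw [e] at hlt ⊢
          refine ih _ ?_ ?_ hlt
          · cases b <;> simp only [Hit] at hh <;> grind
          · cases b <;> simp only [Hit] at hh <;> grind
    obtain ⟨p, b, q, e, h⟩ := gen w [] (by simp) (by simp) (by simp at h1 ⊢; omega)
    exact ⟨p, b, q, by simpa using e, h⟩

lemma K.pro {w} (hw : K w) (hne : w ≠ []) : K (pro w) := by
  obtain ⟨p, b, q, rfl, h⟩ := exists_bump hw hne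
  rw [h.pro]
  obtain ⟨h1, h2, h3, h4⟩ := hw
  obtain ⟨h5, h6, h7⟩ := h
  cases b
  · exact h7.elim
  all_goals
    simp only [Hit] at h7
    refine ⟨?_, ?_, ?_, ?_⟩ <;> grind

end KW

namespace KW

lemma split_cases {p q l m : List KLetter} {b : KLetter} (h : l ++ m = p ++ b :: q) :
    (∃ q1, l = p ++ b :: q1 ∧ q = q1 ++ m) ∨ (∃ m1, p = l ++ m1 ∧ m = m1 ++ b :: q) := by
  rcases List.append_eq_append_iff.1 h with ⟨a, h1, h2⟩ | ⟨a, h1, h2⟩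
  · exact Or.inr ⟨a, h1, h2⟩
  · cases a with
    | nil => right; exact ⟨[], by simpa using h1.symm, by simpa using h2.symm⟩
    | cons c a =>
      simp at h2
      left; exact ⟨a, by rw [h1, h2.1], h2.2⟩

lemma bump_cases {u b} (h : Bump u b) :
    LX 0 u ∧ LY 0 u ∧ ((b = B ∧ X u = 0) ∨ (b = C ∧ Y u = 0)) := by
  obtain ⟨h1, h2, h3⟩ := h
  refine ⟨h1, h2, ?_⟩
  cases b
  · exact h3.elim
  · exact Or.inl ⟨rfl, h3⟩
  · exact Or.inr ⟨rfl, h3⟩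

lemma bumpB {u} (h1 : LX 0 u) (h2 : LY 0 u) (h3 : X u = 0) : Bump u B := ⟨h1, h2, h3⟩
lemma bumpC {u} (h1 : LX 0 u) (h2 : LY 0 u) (h3 : Y u = 0) : Bump u C := ⟨h1, h2, h3⟩

/-- transfer a bump to another prefix with dominated conditions -/
lemma Bump.transfer {u b u'} (h : Bump u b) (h1 : LX 0 u → LY 0 u → LX 0 u')
    (h2 : LX 0 u → LY 0 u → LY 0 u') (h3 : X u' = X u) (h4 : Y u' = Y u) : Bump u' b := by
  refine ⟨h1 h.hx h.hy, h2 h.hx h.hy, ?_⟩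
  have := h.hit
  cases b <;> simp_all [Hit]

lemma K.headA {a l} (h : K (a :: l)) : a = A := by
  obtain ⟨p, b, q, e, _⟩ := exists_bump h (by simp)
  simp at e; exact e.1

lemma H1b (m : ℕ) : ∀ (p q1 q2 s : List KLetter), p.length = m →
    K (p ++ (q1 ++ A :: (q2 ++ s))) → LY 0 (q1 ++ A :: q2) → LX (- X q1) q1 → LX 0 q2 →
    ∃ Q' s', Q'.length = q1.length + 1 + q2.length ∧ s'.length = s.length + m ∧
      pro^[m] (p ++ (q1 ++ A :: (q2 ++ s))) = Q' ++ s' ∧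
      pro^[m + 1] (p ++ A :: (q1 ++ B :: (q2 ++ A :: C :: s))) = Q' ++ A :: C :: (s' ++ [B]) := by
  induction m with
  | zero =>
    intro p q1 q2 s hp hK hY hX hq
    obtain rfl := List.eq_nil_of_length_eq_zero hp
    obtain ⟨k1, k2, k3, k4⟩ := hK
    have hb : Bump q1 B := bumpB (by grind) (by grind) (by grind)
    refine ⟨q1 ++ A :: q2, s, by simp; omega, by simp, by simp, ?_⟩
    simpa using hb.pro (q2 ++ A :: C :: s)
  | succ m ih =>
    intro p q1 q2 s hp hK hY hX hq
    obtain ⟨a, p, rfl⟩ := List.exists_cons_of_length_eq_add_one hp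
    obtain rfl : a = A := K.headA hK
    obtain ⟨u, b, v, e, hb⟩ := exists_bump hK (by simp)
    have hK' := hK.pro (by simp)
    simp only [List.cons_append, List.cons.injEq, true_and] at e hK' hK hp
    have hp' : p.length = m := by simpa using hp
    simp only [List.cons_append]
    rcases split_cases e with ⟨p2, rfl, rfl⟩ | ⟨u, rfl, e'⟩
    · -- bump inside `p`
      have e1 : pro (A :: (u ++ b :: p2 ++ (q1 ++ A :: (q2 ++ s)))) =
          (u ++ A :: p2) ++ (q1 ++ A :: (q2 ++ (s ++ [b]))) := by
        simpa using hb.pro (p2 ++ (q1 ++ A :: (q2 ++ s)))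
      have e2 : pro (A :: (u ++ b :: p2 ++ A :: (q1 ++ B :: (q2 ++ A :: C :: s)))) =
          (u ++ A :: p2) ++ A :: (q1 ++ B :: (q2 ++ A :: C :: (s ++ [b]))) := by
        simpa using hb.pro (p2 ++ A :: (q1 ++ B :: (q2 ++ A :: C :: s)))
      rw [e1] at hK'
      obtain ⟨Q', s', a1, a2, a3, a4⟩ := ih _ _ _ _ (by simpa using hp') hK' hY hX hq
      exact ⟨Q', s', a1, by simp at a2; omega, by
        rw [Function.iterate_succ_apply, e1, a3], by
        rw [Function.iterate_succ_apply, e2, a4]⟩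
    clear e
    rcases split_cases e' with ⟨qb, rfl, rfl⟩ | ⟨u, rfl, e⟩
    · -- bump inside `q1`
      obtain ⟨h1, h2, h3⟩ := bump_cases hb
      obtain ⟨k1, k2, k3, k4⟩ := hK
      obtain ⟨rfl, h3⟩ : b = B ∧ X (p ++ u) = 0 := by
        rcases h3 with h3 | ⟨rfl, h3⟩
        · exact h3
        · exfalso; clear hX hq ih; grind
      have hb' : Bump (p ++ A :: (u ++ B :: qb)) B := by
        clear ih; exact bumpB (by grind) (by grind) (by grind)
      have e1 : pro (A :: (p ++ (u ++ B :: qb ++ A :: (q2 ++ s)))) =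
          p ++ (u ++ A :: (qb ++ A :: q2 ++ (s ++ [B]))) := by
        simpa using hb.pro (qb ++ A :: (q2 ++ s))
      have e2 : pro (A :: (p ++ A :: (u ++ B :: qb ++ B :: (q2 ++ A :: C :: s)))) =
          p ++ A :: (u ++ B :: (qb ++ A :: q2 ++ A :: C :: (s ++ [B]))) := by
        simpa using hb'.pro (q2 ++ A :: C :: s)
      rw [e1] at hK'
      obtain ⟨Q', s', a1, a2, a3, a4⟩ := ih _ _ _ _ hp' hK' (by clear ih; grind)
        (by clear ih; grind) (by clear ih; grind)
      exact ⟨Q', s', by simp at a1 ⊢; omega, by simp at a2; omega, by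
        rw [Function.iterate_succ_apply, e1, a3], by
        rw [Function.iterate_succ_apply, e2, a4]⟩
    cases u with
    | nil =>
      simp at e
      obtain ⟨rfl, -⟩ := e
      exact hb.hit.elim
    | cons a u =>
    simp only [List.cons_append, List.cons.injEq] at e
    obtain ⟨rfl, e⟩ := e
    rcases split_cases e with ⟨qb, rfl, rfl⟩ | ⟨s1, rfl, rfl⟩
    · exfalso
      obtain ⟨h1, h2, h3⟩ := bump_cases hb
      clear ih hK hK' e e'
      rcases h3 with ⟨rfl, h3⟩ | ⟨rfl, h3⟩ <;> grind
    · have hb' : Bump (p ++ A :: (q1 ++ B :: (q2 ++ A :: C :: s1))) b := by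
        clear ih hK hK' e e'
        refine hb.transfer ?_ ?_ ?_ ?_ <;> grind
      have e1 : pro (A :: (p ++ (q1 ++ A :: (q2 ++ (s1 ++ b :: v))))) =
          p ++ (q1 ++ A :: (q2 ++ (s1 ++ A :: (v ++ [b])))) := by
        simpa using hb.pro v
      have e2 : pro (A :: (p ++ A :: (q1 ++ B :: (q2 ++ A :: C :: (s1 ++ b :: v))))) =
          p ++ A :: (q1 ++ B :: (q2 ++ A :: C :: (s1 ++ A :: (v ++ [b])))) := by
        simpa using hb'.pro v
      rw [e1] at hK'
      obtain ⟨Q', s', a1, a2, a3, a4⟩ := ih _ _ _ _ hp' hK' hY hX hq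
      exact ⟨Q', s', a1, by simp at a2 ⊢; omega, by
        rw [Function.iterate_succ_apply, e1, a3], by
        rw [Function.iterate_succ_apply, e2, a4]⟩

lemma H1a (m : ℕ) : ∀ (p Q s : List KLetter), p.length = m →
    K (p ++ (Q ++ s)) → LY 0 Q → LX (- X Q) Q →
    ∃ Q' s', Q'.length = Q.length ∧ s'.length = s.length + m ∧
      pro^[m] (p ++ (Q ++ s)) = Q' ++ s' ∧
      pro^[m + 1] (p ++ A :: (Q ++ B :: C :: s)) = Q' ++ A :: C :: (s' ++ [B]) := by
  induction m with
  | zero =>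
    intro p Q s hp hK hY hX
    obtain rfl := List.eq_nil_of_length_eq_zero hp
    obtain ⟨k1, k2, k3, k4⟩ := hK
    have hb : Bump Q B := bumpB (by grind) (by grind) (by grind)
    refine ⟨Q, s, by simp, by simp, by simp, ?_⟩
    simpa using hb.pro (C :: s)
  | succ m ih =>
    intro p Q s hp hK hY hX
    obtain ⟨a, p, rfl⟩ := List.exists_cons_of_length_eq_add_one hp
    obtain rfl : a = A := K.headA hK
    obtain ⟨u, b, v, e, hb⟩ := exists_bump hK (by simp)
    have hK' := hK.pro (by simp)
    simp only [List.cons_append, List.cons.injEq, true_and] at e hK' hK hp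
    have hp' : p.length = m := by simpa using hp
    simp only [List.cons_append]
    rcases split_cases e with ⟨p2, rfl, rfl⟩ | ⟨u, rfl, e'⟩
    · have e1 : pro (A :: (u ++ b :: p2 ++ (Q ++ s))) =
          (u ++ A :: p2) ++ (Q ++ (s ++ [b])) := by
        simpa using hb.pro (p2 ++ (Q ++ s))
      have e2 : pro (A :: (u ++ b :: p2 ++ A :: (Q ++ B :: C :: s))) =
          (u ++ A :: p2) ++ A :: (Q ++ B :: C :: (s ++ [b])) := by
        simpa using hb.pro (p2 ++ A :: (Q ++ B :: C :: s))
      rw [e1] at hK'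
      obtain ⟨Q', s', a1, a2, a3, a4⟩ := ih _ _ _ (by simpa using hp') hK' hY hX
      exact ⟨Q', s', a1, by simp at a2; omega, by
        rw [Function.iterate_succ_apply, e1, a3], by
        rw [Function.iterate_succ_apply, e2, a4]⟩
    clear e
    rcases split_cases e' with ⟨qb, rfl, rfl⟩ | ⟨s1, rfl, rfl⟩
    · obtain ⟨h1, h2, h3⟩ := bump_cases hb
      obtain ⟨k1, k2, k3, k4⟩ := hK
      obtain ⟨rfl, h3⟩ : b = B ∧ X (p ++ u) = 0 := by
        rcases h3 with h3 | ⟨rfl, h3⟩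
        · exact h3
        · exfalso; clear hX ih; grind
      have hb' : Bump (p ++ A :: (u ++ B :: qb)) B := by
        clear ih; exact bumpB (by grind) (by grind) (by grind)
      have e1 : pro (A :: (p ++ (u ++ B :: qb ++ s))) =
          p ++ (u ++ A :: (qb ++ (s ++ [B]))) := by
        simpa using hb.pro (qb ++ s)
      have e2 : pro (A :: (p ++ A :: (u ++ B :: qb ++ B :: C :: s))) =
          p ++ A :: (u ++ B :: (qb ++ A :: C :: (s ++ [B]))) := by
        simpa using hb'.pro (C :: s)
      rw [e1] at hK'
      obtain ⟨Q', s', a1, a2, a3, a4⟩ := H1b m _ _ _ _ hp' hK' (by clear ih; grind)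
        (by clear ih; grind) (by clear ih; grind)
      exact ⟨Q', s', by simp at a1 ⊢; omega, by simp at a2; omega, by
        rw [Function.iterate_succ_apply, e1, a3], by
        rw [Function.iterate_succ_apply, e2, a4]⟩
    · have hb' : Bump (p ++ A :: (Q ++ B :: C :: s1)) b := by
        clear ih hK hK' e'
        refine hb.transfer ?_ ?_ ?_ ?_ <;> grind
      have e1 : pro (A :: (p ++ (Q ++ (s1 ++ b :: v)))) =
          p ++ (Q ++ (s1 ++ A :: (v ++ [b]))) := by
        simpa using hb.pro v
      have e2 : pro (A :: (p ++ A :: (Q ++ B :: C :: (s1 ++ b :: v)))) =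
          p ++ A :: (Q ++ B :: C :: (s1 ++ A :: (v ++ [b]))) := by
        simpa using hb'.pro v
      rw [e1] at hK'
      obtain ⟨Q', s', a1, a2, a3, a4⟩ := ih _ _ _ hp' hK' hY hX
      exact ⟨Q', s', a1, by simp at a2 ⊢; omega, by
        rw [Function.iterate_succ_apply, e1, a3], by
        rw [Function.iterate_succ_apply, e2, a4]⟩

end KW

namespace KW

def Bad (s : List KLetter) : Prop := ∃ s1 s2, s = s1 ++ s2 ∧ 1 ≤ X s2

lemma Bad.step {u b v} (h : Bad (u ++ b :: v)) : Bad (u ++ A :: v) := by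
  obtain ⟨s1, s2, e, h⟩ := h
  rcases split_cases e.symm with ⟨q, rfl, rfl⟩ | ⟨m, rfl, rfl⟩
  · exact ⟨u ++ A :: q, s2, by simp, h⟩
  · refine ⟨s1, m ++ A :: v, by simp, ?_⟩
    cases b <;> grind

lemma H2 (m : ℕ) : ∀ (p s o : List KLetter), p.length = m → K (p ++ (s ++ o)) →
    ∃ s' o', s'.length = s.length ∧ o'.length = o.length + m ∧
      pro^[m] (p ++ (s ++ o)) = s' ++ o' ∧ (Bad s → Bad s') ∧
      (¬ Bad s' → pro^[m] (p ++ A :: C :: (s ++ B :: o)) = A :: C :: (s' ++ B :: o')) := by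
  induction m with
  | zero =>
    intro p s o hp hK
    obtain rfl := List.eq_nil_of_length_eq_zero hp
    exact ⟨s, o, rfl, rfl, rfl, id, fun _ => rfl⟩
  | succ m ih =>
    intro p s o hp hK
    obtain ⟨a, p, rfl⟩ := List.exists_cons_of_length_eq_add_one hp
    obtain rfl : a = A := K.headA hK
    obtain ⟨u, b, v, e, hb⟩ := exists_bump hK (by simp)
    have hK' := hK.pro (by simp)
    simp only [List.cons_append, List.cons.injEq, true_and] at e hK' hK hp
    have hp' : p.length = m := by simpa using hp
    simp only [List.cons_append, Function.iterate_succ_apply]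
    rcases split_cases e with ⟨p2, rfl, rfl⟩ | ⟨u, rfl, e'⟩
    · have e1 : pro (A :: (u ++ b :: p2 ++ (s ++ o))) = (u ++ A :: p2) ++ (s ++ (o ++ [b])) := by
        simpa using hb.pro (p2 ++ (s ++ o))
      have e2 : pro (A :: (u ++ b :: p2 ++ A :: C :: (s ++ B :: o))) =
          (u ++ A :: p2) ++ A :: C :: (s ++ B :: (o ++ [b])) := by
        simpa using hb.pro (p2 ++ A :: C :: (s ++ B :: o))
      rw [e1] at hK'
      obtain ⟨s', o', a1, a2, a3, a4, a5⟩ := ih _ _ _ (by simpa using hp') hK'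
      rw [e1, e2]
      exact ⟨s', o', a1, by simp at a2; omega, a3, a4, a5⟩
    clear e
    rcases split_cases e' with ⟨s2, rfl, rfl⟩ | ⟨o1, rfl, rfl⟩
    · have e1 : pro (A :: (p ++ (u ++ b :: s2 ++ o))) = p ++ (u ++ A :: s2 ++ (o ++ [b])) := by
        simpa using hb.pro (s2 ++ o)
      rw [e1] at hK'
      obtain ⟨s', o', a1, a2, a3, a4, a5⟩ := ih _ _ _ hp' hK'
      rw [e1]
      refine ⟨s', o', by simpa using a1, by simp at a2; omega, a3, fun h => a4 h.step, ?_⟩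
      intro hbad
      obtain ⟨h1, h2, ⟨rfl, h3⟩ | ⟨rfl, h3⟩⟩ := bump_cases hb
      · exfalso
        refine hbad (a4 ⟨u, A :: s2, rfl, ?_⟩)
        obtain ⟨k1, k2, k3, k4⟩ := hK
        clear a5 ih hK' e1 hb a4
        grind
      · have hb' : Bump (p ++ A :: C :: u) C := by
          clear ih hK hK' e' e1 hb a4 a5
          refine bumpC ?_ ?_ ?_ <;> grind
        have e2 : pro (A :: (p ++ A :: C :: (u ++ C :: s2 ++ B :: o))) =
            p ++ A :: C :: (u ++ A :: s2 ++ B :: (o ++ [C])) := by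
          simpa using hb'.pro (s2 ++ B :: o)
        rw [e2, a5 hbad]
    · have hb' : Bump (p ++ A :: C :: (s ++ B :: o1)) b := by
        clear ih hK hK' e'
        refine hb.transfer ?_ ?_ ?_ ?_ <;> grind
      have e1 : pro (A :: (p ++ (s ++ (o1 ++ b :: v)))) = p ++ (s ++ (o1 ++ A :: (v ++ [b]))) := by
        simpa using hb.pro v
      have e2 : pro (A :: (p ++ A :: C :: (s ++ B :: (o1 ++ b :: v)))) =
          p ++ A :: C :: (s ++ B :: (o1 ++ A :: (v ++ [b]))) := by
        simpa using hb'.pro v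
      rw [e1] at hK'
      obtain ⟨s', o', a1, a2, a3, a4, a5⟩ := ih _ _ _ hp' hK'
      rw [e1, e2]
      exact ⟨s', o', a1, by simp at a2 ⊢; omega, a3, a4, a5⟩

/-- Swap `B` and `C` in a word. -/
def neg (w : List KLetter) : List KLetter := w.map negL

@[simp] lemma X_neg (w) : X (neg w) = Y w := by
  induction w with
  | nil => rfl
  | cons a w ih => simp only [neg, List.map_cons, X_cons, Y_cons] at *; rw [ih]; cases a <;> rfl
@[simp] lemma Y_neg (w) : Y (neg w) = X w := by
  induction w with
  | nil => rfl
  | cons a w ih => simp only [neg, List.map_cons, X_cons, Y_cons] at *; rw [ih]; cases a <;> rfl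
@[simp] lemma neg_neg' (w) : neg (neg w) = w := by
  induction w with
  | nil => rfl
  | cons a w ih => simp only [neg, List.map_cons] at *; rw [ih]; cases a <;> rfl
@[simp] lemma neg_append (v w) : neg (v ++ w) = neg v ++ neg w := by simp [neg]
@[simp] lemma neg_cons (a w) : neg (a :: w) = negL a :: neg w := by simp [neg]
@[simp] lemma neg_nil : neg [] = [] := rfl
@[simp] lemma neg_length (w) : (neg w).length = w.length := by simp [neg]
lemma neg_take (w k) : (neg w).take k = neg (w.take k) := by simp [neg]
@[simp] lemma LX_neg (x w) : LX x (neg w) ↔ LY x w := by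
  simp [LX_iff, LY_iff, neg_take]
@[simp] lemma LY_neg (x w) : LY x (neg w) ↔ LX x w := by
  simp [LX_iff, LY_iff, neg_take]
lemma K.neg {w} (h : K w) : K (neg w) := by
  obtain ⟨h1, h2, h3, h4⟩ := h
  exact ⟨by simpa, by simpa, by simpa, by simpa⟩
lemma Bump.neg {u b} (h : Bump u b) : Bump (neg u) (negL b) := by
  obtain ⟨h1, h2, h3⟩ := h
  refine ⟨by simpa, by simpa, ?_⟩
  cases b <;> simp_all [Hit, negL]
lemma pro_neg {w} (h : K w) (hne : w ≠ []) : pro (neg w) = neg (pro w) := by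
  obtain ⟨u, b, v, rfl, hb⟩ := exists_bump h hne
  have := hb.neg.pro (KW.neg v)
  rw [hb.pro]
  simpa [negL] using this

lemma pro_length {w} (h : K w) (hne : w ≠ []) : (pro w).length = w.length := by
  obtain ⟨u, b, v, rfl, hb⟩ := exists_bump h hne
  rw [hb.pro]; simp; omega

lemma pro_ne {w} (h : K w) (hne : w ≠ []) : pro w ≠ [] := by
  obtain ⟨u, b, v, rfl, hb⟩ := exists_bump h hne
  rw [hb.pro]; simp

lemma K.iter {w} (h : K w) (hne : w ≠ []) (k : ℕ) :
    K (_root_.pro^[k] w) ∧ _root_.pro^[k] w ≠ [] ∧ (_root_.pro^[k] w).length = w.length := by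
  induction k with
  | zero => exact ⟨h, hne, rfl⟩
  | succ k ih =>
    rw [Function.iterate_succ_apply']
    exact ⟨ih.1.pro ih.2.1, pro_ne ih.1 ih.2.1, (pro_length ih.1 ih.2.1).trans ih.2.2⟩

lemma iter_neg {w} (h : K w) (hne : w ≠ []) (k : ℕ) : pro^[k] (neg w) = neg (pro^[k] w) := by
  induction k with
  | zero => rfl
  | succ k ih =>
    rw [Function.iterate_succ_apply', Function.iterate_succ_apply', ih,
      pro_neg (h.iter hne k).1 (h.iter hne k).2.1]

lemma pro_inj {w w'} (h : K w) (hne : w ≠ []) (h' : K w') (hne' : w' ≠ [])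
    (e : pro w = pro w') : w = w' := by
  obtain ⟨u, b, v, rfl, hb⟩ := exists_bump h hne
  obtain ⟨u', b', v', rfl, hb'⟩ := exists_bump h' hne'
  rw [hb.pro, hb'.pro] at e
  have e1 : u ++ A :: v ++ [b] = u' ++ A :: v' ++ [b'] := by simpa using e
  obtain ⟨e2, e3⟩ := List.append_inj' e1 rfl
  obtain rfl : b = b' := by simpa using e3
  obtain ⟨k1, k2, k3, k4⟩ := h
  obtain ⟨k1', k2', k3', k4'⟩ := h'
  have c1 := bump_cases hb
  have c2 := bump_cases hb'
  clear hb hb' e e1 e3 hne hne'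
  rcases split_cases e2 with ⟨q, rfl, rfl⟩ | ⟨q, rfl, h⟩
  · exfalso
    obtain ⟨h1, h2, ⟨rfl, h3⟩ | ⟨rfl, h3⟩⟩ := c1 <;> grind
  · cases q with
    | nil => simp at h; subst h; simp
    | cons a q =>
      simp at h
      obtain ⟨rfl, rfl⟩ := h
      exfalso
      obtain ⟨h1, h2, ⟨rfl, h3⟩ | ⟨rfl, h3⟩⟩ := c1 <;> grind

lemma iter_inj {w w'} (h : K w) (hne : w ≠ []) (h' : K w') (hne' : w' ≠ []) (k : ℕ)
    (e : pro^[k] w = pro^[k] w') : w = w' := by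
  induction k with
  | zero => exact e
  | succ k ih =>
    rw [Function.iterate_succ_apply', Function.iterate_succ_apply'] at e
    exact ih (pro_inj (h.iter hne k).1 (h.iter hne k).2.1 (h'.iter hne' k).1 (h'.iter hne' k).2.1 e)

lemma orbit (m : ℕ) : ∀ b q, b ≠ A → K (A :: (List.replicate m A ++ b :: q)) →
    ∃ k b' q', b' ≠ A ∧ pro^[k] (A :: (List.replicate m A ++ b :: q)) = A :: b' :: q' := by
  induction m with
  | zero => intro b q hb hK; exact ⟨0, b, q, hb, rfl⟩
  | succ m ih =>
    intro b q hb hK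
    obtain ⟨u, c, v, e, hc⟩ := exists_bump hK (by simp)
    have hK' := hK.pro (by simp)
    simp only [List.cons.injEq, true_and] at e
    rcases split_cases e with ⟨q1, h1, h2⟩ | ⟨u, rfl, h2⟩
    · exfalso
      have : c ∈ List.replicate (m+1) A := by rw [h1]; simp
      obtain rfl := List.eq_of_mem_replicate this
      exact hc.hit
    · have rX : ∀ m, X (List.replicate m A) = m := by
        intro m
        induction m with
        | zero => simp
        | succ m ih => simp [List.replicate_succ, ih]; ring
      have rY : ∀ m, Y (List.replicate m A) = m := by
        intro m
        induction m with
        | zero => simp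
        | succ m ih => simp [List.replicate_succ, ih]; ring
      cases u with
      | nil =>
        exfalso
        have := rX (m+1)
        have := rY (m+1)
        have c1 := bump_cases hc
        simp only [List.append_nil] at c1
        push_cast at *
        omega
      | cons a u =>
        simp only [List.cons_append, List.cons.injEq] at h2
        obtain ⟨rfl, rfl⟩ := h2
        have e1 : pro (A :: (List.replicate (m+1) A ++ b :: (u ++ c :: v))) =
            A :: (List.replicate m A ++ b :: (u ++ A :: (v ++ [c]))) := by
          have := hc.pro v
          simpa [List.replicate_succ] using this
        rw [e1] at hK'
        obtain ⟨k, b', q', h1, h2⟩ := ih _ _ hb hK'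
        exact ⟨k + 1, b', q', h1, by rw [Function.iterate_succ_apply, e1, h2]⟩

lemma split_As (l : List KLetter) (h : ∃ b ∈ l, b ≠ A) :
    ∃ m b q, b ≠ A ∧ l = List.replicate m A ++ b :: q := by
  induction l with
  | nil => simp at h
  | cons a l ih =>
    by_cases ha : a = A
    · subst ha
      obtain ⟨m, b, q, h1, rfl⟩ := ih (by simpa using h)
      exact ⟨m + 1, b, q, h1, by simp [List.replicate_succ]⟩
    · exact ⟨0, a, l, ha, rfl⟩

lemma orbit' {w} (h : K w) (hne : w ≠ []) :
    ∃ k b' q', b' ≠ A ∧ pro^[k] w = A :: b' :: q' := by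
  obtain ⟨u, b, v, rfl, hb⟩ := exists_bump h hne
  obtain ⟨m, c, q, h1, h2⟩ := split_As (u ++ b :: v) ⟨b, by simp, by rintro rfl; exact hb.hit⟩
  rw [h2] at h ⊢
  exact orbit m c q h1 h

lemma first_zero (w : List KLetter) : ∀ p : List KLetter, LY 0 p → Y (p ++ w) < 0 →
    ∃ p' q, p ++ w = p' ++ C :: q ∧ LY 0 p' ∧ Y p' = 0 := by
  induction w with
  | nil => intro p h1 h2; exfalso; grind
  | cons b w ih =>
    intro p h1 h2
    by_cases hh : b = C ∧ Y p = 0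
    · obtain ⟨rfl, hh⟩ := hh
      exact ⟨p, w, rfl, h1, hh⟩
    · have e : p ++ b :: w = (p ++ [b]) ++ w := by simp
      rw [e] at h2 ⊢
      refine ih _ ?_ h2
      clear ih
      cases b <;> grind

lemma proN_B {n : ℕ} (ih : ∀ w, K w → w.length = 3 * n → pro^[3 * n] w = neg w)
    (rest : List KLetter) (hK : K (A :: B :: rest)) (hl : rest.length = 3 * n + 1) :
    pro^[3 * (n + 1)] (A :: B :: rest) = neg (A :: B :: rest) := by
  obtain ⟨v1, v2, e, hv1, hv2⟩ : ∃ p' q, [] ++ rest = p' ++ C :: q ∧ LY 0 p' ∧ Y p' = 0 := by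
    obtain ⟨k1, k2, k3, k4⟩ := hK
    exact first_zero rest [] (by simp) (by grind)
  simp only [List.nil_append] at e
  subst e
  have e1 : pro (A :: B :: (v1 ++ C :: v2)) = A :: (v1 ++ C :: (v2 ++ [B])) := by
    have hb : Bump [] B := bumpB (by simp) (by simp) (by simp)
    simpa using hb.pro (v1 ++ C :: v2)
  have e2 : pro (A :: (v1 ++ C :: (v2 ++ [B]))) = v1 ++ A :: (v2 ++ [B, C]) := by
    obtain ⟨k1, k2, k3, k4⟩ := hK
    have hb : Bump v1 C := bumpC (by grind) hv1 hv2
    simpa using hb.pro (v2 ++ [B])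
  have hK' : K (v1 ++ (v2 ++ [])) := by
    obtain ⟨k1, k2, k3, k4⟩ := hK
    clear ih
    refine ⟨?_, ?_, ?_, ?_⟩ <;> grind
  obtain ⟨Q', s', a1, a2, a3, a4⟩ := H1a v1.length v1 v2 [] rfl hK'
    (by obtain ⟨k1, k2, k3, k4⟩ := hK; grind) (by obtain ⟨k1, k2, k3, k4⟩ := hK; grind)
  have hK2 : K (Q' ++ (s' ++ [])) := by
    rw [List.append_nil, ← a3]
    by_cases h0 : v1 ++ (v2 ++ []) = []
    · have : v1 = [] := by simp at h0; exact h0.1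
      subst this
      exact hK'
    · exact (hK'.iter h0 _).1
  obtain ⟨s2, o2, b1, b2, b3, -, b5⟩ := H2 v2.length Q' s' [] a1 hK2
  simp only [List.append_nil] at *
  have hn : 3 * n = v2.length + v1.length := by simp at hl; omega
  have f1 := ih _ hK' (by simp; omega)
  rw [hn, Function.iterate_add_apply, a3, b3, neg_append] at f1
  obtain ⟨rfl, rfl⟩ := List.append_inj f1 (by simp; simp at a2; omega)
  have hbad : ¬ Bad (neg v1) := by
    rintro ⟨t1, t2, ht, h1⟩
    have h2 : X (neg v1) = 0 := by simpa
    have h3 : LX 0 (neg v1) := by simpa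
    clear b5 ih
    grind
  have hN : 3 * (n + 1) = v2.length + ((v1.length + 1) + 1 + 1) := by omega
  rw [hN, Function.iterate_add_apply, Function.iterate_succ_apply, Function.iterate_succ_apply,
    e1, e2, a4, b5 hbad]
  simp [negL]

theorem proN (n : ℕ) : ∀ w, K w → w.length = 3 * n → pro^[3 * n] w = neg w := by
  induction n with
  | zero =>
    intro w hK hl
    obtain rfl := List.eq_nil_of_length_eq_zero (by simpa using hl)
    rfl
  | succ n ih =>
    intro w hK hl
    have hne : w ≠ [] := by rintro rfl; simp at hl
    obtain ⟨k, b, q, hb, e⟩ := orbit' hK hne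
    obtain ⟨k1, k2, k3⟩ := hK.iter hne k
    have main : pro^[3 * (n+1)] (pro^[k] w) = neg (pro^[k] w) := by
      rw [e] at k1 k2 k3 ⊢
      cases b with
      | A => exact absurd rfl hb
      | B => exact proN_B ih q k1 (by simp at k3; omega)
      | C =>
        have := proN_B ih (neg q) (by simpa [negL] using k1.neg) (by simp at k3 ⊢; omega)
        have e1 : A :: B :: neg q = neg (A :: C :: q) := by simp [negL]
        rw [e1, iter_neg k1 k2] at this
        have := congrArg neg this
        simpa [negL] using this
    have hk := hK.iter hne (3 * (n+1))
    apply iter_inj hk.1 hk.2.1 hK.neg (by cases w <;> simp_all) k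
    rw [iter_neg hK hne, ← main, ← Function.iterate_add_apply, ← Function.iterate_add_apply,
      add_comm]

end KW

namespace KW

lemma tau_spec (n : ℕ) (l r : List KLetter) (a b : KLetter) :
    (IsKrewerasWord n (l ++ b :: a :: r) → tau n (l.length + 1) (l ++ a :: b :: r) = l ++ b :: a :: r) ∧
    (¬ IsKrewerasWord n (l ++ b :: a :: r) →
      tau n (l.length + 1) (l ++ a :: b :: r) = l ++ a :: b :: r) := by
  have e : ((l ++ a :: b :: r).set (l.length + 1 - 1) ((l ++ a :: b :: r).getD (l.length + 1) A)).set
      (l.length + 1) ((l ++ a :: b :: r).getD (l.length + 1 - 1) A) = l ++ b :: a :: r := by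
    simp [List.getD_eq_getElem?_getD]
  unfold tau
  simp only [e]
  constructor
  · intro h; rw [if_pos (by rw [e]; exact h)]
  · intro h; rw [if_neg (by rw [e]; exact h)]

lemma tau_isK {n i v} (h : IsKrewerasWord n v) : IsKrewerasWord n (tau n i v) := by
  unfold tau
  simp only
  split_ifs with h'
  · exact h'
  · exact h

lemma tauDown_isK {n j v} (h : IsKrewerasWord n v) : IsKrewerasWord n (tauDown n j v) := by
  induction j with
  | zero => exact h
  | succ j ih => exact tau_isK ih

lemma evacAux_isK {n j v} (h : IsKrewerasWord n v) : IsKrewerasWord n (evacAux n j v) := by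
  induction j generalizing v with
  | zero => exact h
  | succ j ih => exact ih (tauDown_isK h)

lemma decomp2 (v : List KLetter) (i : ℕ) (h : i + 2 ≤ v.length) :
    ∃ l a b r, v = l ++ a :: b :: r ∧ l.length = i := by
  refine ⟨v.take i, v[i], v[i+1], v.drop (i+2), ?_, by simp; omega⟩
  rw [← List.drop_eq_getElem_cons, ← List.drop_eq_getElem_cons, List.take_append_drop]

lemma tau_tau {n i v} (h : IsKrewerasWord n v) (hi : i + 2 ≤ 3 * n) :
    tau n (i + 1) (tau n (i + 1) v) = v := by
  obtain ⟨l, a, b, r, rfl, rfl⟩ := decomp2 v i (by rw [h.1]; exact hi)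
  by_cases h' : IsKrewerasWord n (l ++ b :: a :: r)
  · rw [(tau_spec n l r a b).1 h', (tau_spec n l r b a).1 h]
  · rw [(tau_spec n l r a b).2 h', (tau_spec n l r a b).2 h']

lemma K_swap {l r : List KLetter} {a b} (h : K (l ++ a :: b :: r)) :
    K (l ++ b :: a :: r) ↔ LX 0 (l ++ [b]) ∧ LY 0 (l ++ [b]) := by
  obtain ⟨h1, h2, h3, h4⟩ := h
  simp only [K, X_append, Y_append, X_cons, Y_cons, LX_append, LY_append, LX_cons, LY_cons,
    LX_nil, LY_nil, zero_add] at *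
  have e1 : X l + dx b + dx a = X l + dx a + dx b := by ring
  have e2 : Y l + dy b + dy a = Y l + dy a + dy b := by ring
  rw [e1, e2]
  constructor
  · rintro ⟨h5, h6, h7, h8⟩
    exact ⟨⟨h7.1, h7.2.1, h7.2.2.1⟩, h8.1, h8.2.1, h8.2.2.1⟩
  · rintro ⟨⟨h5, h6, h7⟩, h8, h9, h10⟩
    exact ⟨by omega, by omega, ⟨h5, h6, h7, h3.2.2.2⟩, h8, h9, h10, h4.2.2.2⟩

lemma isK_swap {n} {l r : List KLetter} {a b} (h : IsKrewerasWord n (l ++ a :: b :: r)) :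
    IsKrewerasWord n (l ++ b :: a :: r) ↔ LX 0 (l ++ [b]) ∧ LY 0 (l ++ [b]) := by
  rw [isK_iff] at h ⊢
  rw [← K_swap h.2]
  simp at h ⊢
  exact fun _ => h.1

lemma LX_comm {l m : List KLetter} {a b x} (h1 : LX x (l ++ [a])) (h2 : LX x (l ++ [b])) :
    LX x (l ++ a :: b :: m) ↔ LX x (l ++ b :: a :: m) := by
  have e1 : x + X l + dx b + dx a = x + X l + dx a + dx b := by ring
  simp only [LX_append, LX_cons, LX_nil] at *
  rw [e1]
  tauto
lemma LY_comm {l m : List KLetter} {a b x} (h1 : LY x (l ++ [a])) (h2 : LY x (l ++ [b])) :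
    LY x (l ++ a :: b :: m) ↔ LY x (l ++ b :: a :: m) := by
  have e1 : x + Y l + dy b + dy a = x + Y l + dy a + dy b := by ring
  simp only [LY_append, LY_cons, LY_nil] at *
  rw [e1]
  tauto

lemma tau_comm {n i j v} (h : IsKrewerasWord n v) (hij : i + 2 ≤ j) (hj : j + 2 ≤ 3 * n) :
    tau n (i + 1) (tau n (j + 1) v) = tau n (j + 1) (tau n (i + 1) v) := by
  obtain ⟨t, c, d, r, rfl, rfl⟩ := decomp2 v j (by rw [h.1]; exact hj)
  obtain ⟨l, a, b, m, rfl, rfl⟩ := decomp2 t i hij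
  have Ti : ∀ s, IsKrewerasWord n (l ++ a :: b :: s) →
      (LX 0 (l ++ [b]) ∧ LY 0 (l ++ [b]) → tau n (l.length + 1) (l ++ a :: b :: s) = l ++ b :: a :: s) ∧
      (¬ (LX 0 (l ++ [b]) ∧ LY 0 (l ++ [b])) → tau n (l.length + 1) (l ++ a :: b :: s) = l ++ a :: b :: s) := by
    intro s hs
    rw [← isK_swap hs]
    exact tau_spec n l s a b
  have Tj : ∀ t', IsKrewerasWord n (t' ++ c :: d :: r) → t'.length = (l ++ a :: b :: m).length →
      (LX 0 (t' ++ [d]) ∧ LY 0 (t' ++ [d]) →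
        tau n ((l ++ a :: b :: m).length + 1) (t' ++ c :: d :: r) = t' ++ d :: c :: r) ∧
      (¬ (LX 0 (t' ++ [d]) ∧ LY 0 (t' ++ [d])) →
        tau n ((l ++ a :: b :: m).length + 1) (t' ++ c :: d :: r) = t' ++ c :: d :: r) := by
    intro t' hs ht
    rw [← isK_swap hs, ← ht]
    exact tau_spec n t' r c d
  have ha : LX 0 (l ++ [a]) ∧ LY 0 (l ++ [a]) := by
    obtain ⟨-, -, -, h3, h4⟩ := (isK_iff _ _).1 h
    clear Ti Tj
    constructor <;> grind
  have hK1 := @isK_swap n l (m ++ c :: d :: r) a b (by simpa using h)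
  have hK2 := isK_swap h
  by_cases h1 : LX 0 (l ++ [b]) ∧ LY 0 (l ++ [b])
  · have hc : (LX 0 (l ++ b :: a :: m ++ [d]) ∧ LY 0 (l ++ b :: a :: m ++ [d])) ↔
        (LX 0 (l ++ a :: b :: m ++ [d]) ∧ LY 0 (l ++ a :: b :: m ++ [d])) := by
      have := LX_comm (m := m ++ [d]) ha.1 h1.1
      have := LY_comm (m := m ++ [d]) ha.2 h1.2
      simp only [List.append_assoc, List.cons_append] at *
      tauto
    have g1 := (Ti (m ++ c :: d :: r) (by simpa using h)).1 h1
    have hK1' := hK1.2 h1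
    by_cases h2 : LX 0 (l ++ a :: b :: m ++ [d]) ∧ LY 0 (l ++ a :: b :: m ++ [d])
    · have g2 := (Tj _ h rfl).1 h2
      have g3 := (Ti (m ++ d :: c :: r) (by simpa using hK2.2 h2)).1 h1
      have g4 := (Tj (l ++ b :: a :: m) (by simpa using hK1') (by simp)).1 (hc.2 h2)
      rw [g2]
      simp only [List.append_assoc, List.cons_append] at *
      rw [g1, g3, g4]
    · have g2 := (Tj _ h rfl).2 h2
      have g4 := (Tj (l ++ b :: a :: m) (by simpa using hK1') (by simp)).2 (by rwa [hc])
      rw [g2]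
      simp only [List.append_assoc, List.cons_append] at *
      rw [g1, g4]
  · have g1 := (Ti (m ++ c :: d :: r) (by simpa using h)).2 h1
    by_cases h2 : LX 0 (l ++ a :: b :: m ++ [d]) ∧ LY 0 (l ++ a :: b :: m ++ [d])
    · have g2 := (Tj _ h rfl).1 h2
      have g3 := (Ti (m ++ d :: c :: r) (by simpa using hK2.2 h2)).2 h1
      rw [g2]
      simp only [List.append_assoc, List.cons_append] at *
      rw [g1, g3, g2]
    · have g2 := (Tj _ h rfl).2 h2
      rw [g2]
      simp only [List.append_assoc, List.cons_append] at *
      rw [g1, g2]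

lemma tauDown_comm {n i j v} (h : IsKrewerasWord n v) (hij : i + 1 ≤ j) (hj : j + 2 ≤ 3 * n) :
    tauDown n i (tau n (j + 1) v) = tau n (j + 1) (tauDown n i v) := by
  induction i with
  | zero => rfl
  | succ i ih =>
    simp only [tauDown]
    rw [ih (by omega), tau_comm (tauDown_isK h) (by omega) hj]

lemma evacAux_comm {n i j v} (h : IsKrewerasWord n v) (hij : i + 1 ≤ j) (hj : j + 2 ≤ 3 * n) :
    evacAux n i (tau n (j + 1) v) = tau n (j + 1) (evacAux n i v) := by
  induction i generalizing v with
  | zero => rfl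
  | succ i ih =>
    simp only [evacAux]
    rw [tauDown_comm h hij hj, ih (tauDown_isK h) (by omega)]

lemma dual {n j v} (h : IsKrewerasWord n v) (hj : j + 2 ≤ 3 * n) :
    tauDown n (j + 1) (evacAux n j (tauDown n (j + 1) v)) = evacAux n j v := by
  induction j generalizing v with
  | zero =>
    simp only [tauDown, evacAux]
    exact tau_tau h hj
  | succ j ih =>
    have e1 : tauDown n (j + 1 + 1) v = tau n (j + 1 + 1) (tauDown n (j + 1) v) := rfl
    have e2 : ∀ x, tauDown n (j + 1 + 1) x = tau n (j + 1 + 1) (tauDown n (j + 1) x) := fun _ => rfl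
    have e3 : ∀ x, evacAux n (j + 1) x = evacAux n j (tauDown n (j + 1) x) := fun _ => rfl
    have h1 := tauDown_isK (j := j + 1) h
    rw [e2, e3, ih (tauDown_isK h) (by omega), e2, evacAux_comm h1 (by omega) hj,
      tau_tau (evacAux_isK h1) hj, e3]

section
variable {n : ℕ} {u q : List KLetter} {b : KLetter}

lemma D1 (h : IsKrewerasWord n (A :: (u ++ b :: q))) (hb : Bump u b) (u1 : List KLetter) :
    ∀ u2, u = u1 ++ u2 → tauDown n u1.length (A :: (u ++ b :: q)) = u1 ++ A :: (u2 ++ b :: q) := by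
  induction u1 using List.reverseRecOn with
  | nil => rintro u2 rfl; rfl
  | append_singleton l c ih =>
    intro u2 e
    have g := ih (c :: u2) (by simpa using e)
    have hK := tauDown_isK (j := l.length) h
    rw [g] at hK
    have hs := (isK_swap (l := l) (a := A) (b := c) (r := u2 ++ b :: q) (by simpa using hK)).2
      (by have := hb.hx; have := hb.hy; subst e; clear hK g ih h hb; constructor <;> grind)
    have := (tau_spec n l (u2 ++ b :: q) A c).1 hs
    simp only [List.length_append, List.length_singleton, tauDown]
    rw [g]
    simpa using this

lemma D2 (h : IsKrewerasWord n (A :: (u ++ b :: q))) (hb : Bump u b) (q1 : List KLetter) :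
    ∀ q2, q = q1 ++ q2 → tauDown n (u.length + 1 + q1.length) (A :: (u ++ b :: q)) =
      u ++ A :: (q1 ++ b :: q2) := by
  induction q1 using List.reverseRecOn with
  | nil =>
    rintro q2 e
    obtain rfl : q = q2 := by simpa using e
    have g := D1 h hb u [] (by simp)
    simp only [List.length_nil, add_zero, tauDown, List.nil_append] at *
    rw [g]
    refine (tau_spec n u q A b).2 ?_
    have hK := tauDown_isK (j := u.length) h
    rw [g] at hK
    rw [isK_swap hK]
    obtain ⟨h1, h2, ⟨rfl, h3⟩ | ⟨rfl, h3⟩⟩ := bump_cases hb <;> clear h hK g hb <;> grind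
  | append_singleton l c ih =>
    intro q2 e
    have g := ih (c :: q2) (by simpa using e)
    have hK := tauDown_isK (j := u.length + 1 + l.length) h
    rw [g] at hK
    have hs := (isK_swap (l := u ++ A :: l) (a := b) (b := c) (r := q2) (by simpa using hK)).2
      (by
        obtain ⟨-, -, -, h3, h4⟩ := (isK_iff _ _).1 h
        have c1 := bump_cases hb
        subst e; clear hK g ih h hb
        obtain ⟨h1, h2, ⟨rfl, h3⟩ | ⟨rfl, h3⟩⟩ := c1 <;> constructor <;> grind)
    have := (tau_spec n (u ++ A :: l) q2 b c).1 hs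
    simp only [List.length_append, List.length_singleton, ← add_assoc, tauDown]
    rw [g]
    have e' : (u ++ A :: l).length + 1 = u.length + 1 + l.length + 1 := by simp; omega
    rw [e'] at this
    simpa using this
end

lemma isK_ne {n v} (h : IsKrewerasWord n v) (hn : 1 ≤ n) : v ≠ [] := by
  rintro rfl; have := h.1; simp at this; omega

lemma isK_pro {n v} (h : IsKrewerasWord n v) (hn : 1 ≤ n) : IsKrewerasWord n (pro v) := by
  have hv := isK_ne h hn
  rw [isK_iff] at *
  exact ⟨(pro_length h.2 hv).trans h.1, h.2.pro hv⟩

lemma isK_iter {n v} (h : IsKrewerasWord n v) (hn : 1 ≤ n) (k) : IsKrewerasWord n (pro^[k] v) := by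
  induction k with
  | zero => exact h
  | succ k ih => rw [Function.iterate_succ_apply']; exact isK_pro ih hn

lemma tauDown_pro {n v} (h : IsKrewerasWord n v) (hn : 1 ≤ n) : tauDown n (3 * n - 1) v = pro v := by
  obtain ⟨u, b, q, rfl, hb⟩ := exists_bump ((isK_iff _ _).1 h).2 (isK_ne h hn)
  have := D2 h hb q [] (by simp)
  have e : 3 * n - 1 = u.length + 1 + q.length := by
    have := h.1; simp at this; omega
  rw [e, this, hb.pro]

lemma tauDown_take {n v} (h : IsKrewerasWord n v) (hn : 1 ≤ n) (j : ℕ) (hj : j + 1 ≤ 3 * n) :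
    (tauDown n j v).take j = (pro v).take j := by
  obtain ⟨u, b, q, rfl, hb⟩ := exists_bump ((isK_iff _ _).1 h).2 (isK_ne h hn)
  have hl : u.length + q.length + 2 = 3 * n := by have := h.1; simp at this; omega
  rw [hb.pro]
  by_cases hju : j ≤ u.length
  · have := D1 h hb (u.take j) (u.drop j) (by simp)
    have e : (u.take j).length = j := by simp; omega
    rw [e] at this
    rw [this, List.take_append_of_le_length (by omega), List.take_append_of_le_length hju]
    simp
  · obtain ⟨k, rfl⟩ := Nat.exists_eq_add_of_lt (not_le.1 hju)
    have := D2 h hb (q.take k) (q.drop k) (by simp)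
    have e : (q.take k).length = k := by simp; omega
    rw [e] at this
    have e' : u.length + k + 1 = u.length + 1 + k := by omega
    rw [e', this]
    have e2 : u ++ A :: (List.take k q ++ b :: List.drop k q) =
      (u ++ A :: List.take k q) ++ b :: List.drop k q := by simp
    have e3 : u ++ A :: (q ++ [b]) = (u ++ A :: List.take k q) ++ (List.drop k q ++ [b]) := by
      simp only [List.append_assoc, List.cons_append]
      rw [← List.append_assoc (List.take k q), List.take_append_drop]
    have e4 : (u ++ A :: List.take k q).length = u.length + 1 + k := by simp; omega
    rw [e2, e3, ← e4, List.take_left, List.take_left]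

lemma pro_evac_pro {n z} (h : IsKrewerasWord n z) (hn : 1 ≤ n) :
    pro (evac n (pro z)) = evac n z := by
  obtain ⟨M, hM⟩ : ∃ M, 3 * n - 1 = M + 1 := ⟨3 * n - 2, by omega⟩
  have h1 := isK_pro h hn
  unfold evac
  rw [← tauDown_pro (evacAux_isK h1) hn, hM]
  have e3 : ∀ x, evacAux n (M + 1) x = evacAux n M (tauDown n (M + 1) x) := fun _ => rfl
  rw [e3, dual h1 (by omega), e3, ← hM, tauDown_pro h hn]

lemma iter_evac_iter {n z} (h : IsKrewerasWord n z) (hn : 1 ≤ n) (k : ℕ) :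
    pro^[k] (evac n (pro^[k] z)) = evac n z := by
  induction k with
  | zero => rfl
  | succ k ih =>
    rw [Function.iterate_succ_apply, Function.iterate_succ_apply',
      pro_evac_pro (isK_iter h hn k) hn, ih]

end KW

namespace KW

lemma tau_take {n i v} (ℓ : ℕ) (h : IsKrewerasWord n v) (hi : i + 2 ≤ 3 * n) (hl : ℓ ≠ i + 1) :
    X ((tau n (i + 1) v).take ℓ) = X (v.take ℓ) ∧ Y ((tau n (i + 1) v).take ℓ) = Y (v.take ℓ) := by
  obtain ⟨l, a, b, r, rfl, rfl⟩ := decomp2 v i (by rw [h.1]; exact hi)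
  by_cases h' : IsKrewerasWord n (l ++ b :: a :: r)
  · rw [(tau_spec n l r a b).1 h']
    by_cases hl' : ℓ ≤ l.length
    · rw [List.take_append_of_le_length hl', List.take_append_of_le_length hl']
      simp
    · obtain ⟨k, rfl⟩ : ∃ k, ℓ = l.length + (k + 2) := ⟨ℓ - l.length - 2, by omega⟩
      rw [List.take_length_add_append, List.take_length_add_append]
      simp
      constructor <;> ring
  · rw [(tau_spec n l r a b).2 h']
    simp

lemma tauDown_takeX {n j v} (ℓ : ℕ) (h : IsKrewerasWord n v) (hj : j + 1 ≤ 3 * n) (hl : j < ℓ) :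
    X ((tauDown n j v).take ℓ) = X (v.take ℓ) ∧ Y ((tauDown n j v).take ℓ) = Y (v.take ℓ) := by
  induction j with
  | zero => exact ⟨rfl, rfl⟩
  | succ j ih =>
    have h1 := ih (by omega) (by omega)
    have h2 := tau_take (i := j) ℓ (tauDown_isK (j := j) h) (by omega) (by omega)
    exact ⟨h2.1.trans h1.1, h2.2.trans h1.2⟩

lemma evacAux_takeX {n j v} (ℓ : ℕ) (h : IsKrewerasWord n v) (hj : j + 1 ≤ 3 * n) (hl : j < ℓ) :
    X ((evacAux n j v).take ℓ) = X (v.take ℓ) ∧ Y ((evacAux n j v).take ℓ) = Y (v.take ℓ) := by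
  induction j generalizing v with
  | zero => exact ⟨rfl, rfl⟩
  | succ j ih =>
    have h1 := ih (tauDown_isK (j := j + 1) h) (by omega) (by omega)
    have h2 := tauDown_takeX (j := j + 1) ℓ h hj hl
    exact ⟨h1.1.trans h2.1, h1.2.trans h2.2⟩

/-- locality, first case -/
lemma prefix_aux {u q v' : List KLetter} {c : KLetter} {m : ℕ} (hb : Bump u c)
    (hm : u.length + 1 ≤ m) (hlen : (A :: (u ++ c :: q)).length = v'.length)
    (hm' : m + 1 ≤ v'.length)
    (e : (A :: (u ++ c :: q)).take (m + 1) = v'.take (m + 1)) :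
    (pro (A :: (u ++ c :: q))).take m = (pro v').take m := by
  obtain ⟨k, rfl⟩ : ∃ k, m = u.length + (k + 1) := ⟨m - u.length - 1, by omega⟩
  rw [List.take_succ_cons, List.take_length_add_append, List.take_succ_cons] at e
  have e' := List.take_append_drop (u.length + (k + 1) + 1) v'
  rw [← e] at e'
  generalize v'.drop (u.length + (k + 1) + 1) = t at *
  subst e'
  have e1 := hb.pro (q.take k ++ t)
  simp only [List.cons_append, List.append_assoc] at *
  rw [e1, hb.pro, List.take_length_add_append, List.take_length_add_append, List.take_succ_cons,
    List.take_succ_cons]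
  have hk : k ≤ q.length := by simp at hlen hm'; omega
  rw [List.take_append_of_le_length hk, List.take_append_of_le_length (by simp; omega)]
  simp [hk]

lemma pro_prefix {n v v'} (h : IsKrewerasWord n v) (h' : IsKrewerasWord n v') (hn : 1 ≤ n) {m : ℕ}
    (hm : m + 1 ≤ 3 * n) (e : v.take (m + 1) = v'.take (m + 1)) :
    (pro v).take m = (pro v').take m := by
  have hl : v.length = v'.length := h.1.trans h'.1.symm
  obtain ⟨u, b, q, rfl, hb⟩ := exists_bump ((isK_iff _ _).1 h).2 (isK_ne h hn)
  obtain ⟨u', b', q', rfl, hb'⟩ := exists_bump ((isK_iff _ _).1 h').2 (isK_ne h' hn)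
  by_cases h1 : u.length + 1 ≤ m
  · exact prefix_aux hb h1 hl (by rw [h'.1]; exact hm) e
  by_cases h2 : u'.length + 1 ≤ m
  · exact (prefix_aux hb' h2 hl.symm (by rw [h.1]; exact hm) e.symm).symm
  · simp only [List.take_succ_cons, List.cons.injEq, true_and] at e
    rw [hb.pro, hb'.pro]
    rw [List.take_append_of_le_length (by omega), List.take_append_of_le_length (by omega)] at e ⊢
    exact e

lemma iter_prefix {n} (hn : 1 ≤ n) (k : ℕ) : ∀ {v v' : List KLetter}, IsKrewerasWord n v →
    IsKrewerasWord n v' → ∀ {m : ℕ}, m + k ≤ 3 * n → v.take (m + k) = v'.take (m + k) →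
    (pro^[k] v).take m = (pro^[k] v').take m := by
  induction k with
  | zero => intro v v' h h' m hm e; exact e
  | succ k ih =>
    intro v v' h h' m hm e
    rw [Function.iterate_succ_apply, Function.iterate_succ_apply]
    exact ih (isK_pro h hn) (isK_pro h' hn) (by omega) (pro_prefix h h' hn (by omega) e)

lemma EV {n} (hn : 1 ≤ n) (j : ℕ) : ∀ {v : List KLetter}, IsKrewerasWord n v → j + 1 ≤ 3 * n →
    ∀ ℓ k, ℓ + k = j + 1 →
    X ((evacAux n j v).take ℓ) = X ((pro^[k] v).take ℓ) ∧
    Y ((evacAux n j v).take ℓ) = Y ((pro^[k] v).take ℓ) := by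
  induction j with
  | zero =>
    intro v h hj ℓ k e
    rcases k with _ | k
    · exact ⟨rfl, rfl⟩
    · obtain rfl : ℓ = 0 := by omega
      simp
  | succ j ih =>
    intro v h hj ℓ k e
    rcases k with _ | k
    · exact evacAux_takeX ℓ h hj (by omega)
    · have h1 := ih (tauDown_isK (j := j + 1) h) (by omega) ℓ k (by omega)
      have h2 := iter_prefix hn k (tauDown_isK (j := j + 1) h) (isK_pro h hn) (m := ℓ) (by omega)
        (by
          have := tauDown_take h hn (j + 1) hj
          have e' : ℓ + k = j + 1 := by omega
          rw [e', this])
      rw [h2] at h1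
      exact h1

lemma shiftA {v : List KLetter} (h : K v) (hne : v ≠ []) {i : ℕ} (hi : v[i + 1]? = some A) :
    (pro v)[i]? = some A := by
  obtain ⟨u, b, q, rfl, hb⟩ := exists_bump h hne
  rw [hb.pro]
  simp only [List.getElem?_cons_succ] at hi
  by_cases h1 : i < u.length
  · rw [List.getElem?_append_left h1] at hi ⊢; exact hi
  · rw [List.getElem?_append_right (by omega)] at hi ⊢
    rcases hk : i - u.length with _ | k
    · simp
    · rw [hk] at hi
      simp only [List.getElem?_cons_succ] at hi ⊢
      have : k < q.length := by
        by_contra hc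
        rw [List.getElem?_eq_none (by omega)] at hi
        simp at hi
      rw [List.getElem?_append_left this]; exact hi

lemma iter_shiftA {n v} (h : IsKrewerasWord n v) (hn : 1 ≤ n) (k i : ℕ)
    (hi : v[i + k]? = some A) : (pro^[k] v)[i]? = some A := by
  induction k generalizing i with
  | zero => exact hi
  | succ k ih =>
    rw [Function.iterate_succ_apply']
    have hk := isK_iter h hn k
    refine shiftA ((isK_iff _ _).1 hk).2 (isK_ne hk hn) (ih _ ?_)
    rw [← hi]; congr 1; omega

lemma kiota_range {n v} (h : IsKrewerasWord n v) (hn : 1 ≤ n) :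
    2 ≤ kiota v ∧ kiota v ≤ 3 * n ∧ Zr v (kiota v) ∧ (pro v)[kiota v - 2]? = some A := by
  obtain ⟨u, b, q, rfl, hb⟩ := exists_bump ((isK_iff _ _).1 h).2 (isK_ne h hn)
  have hl := h.1
  rw [hb.kiota, hb.pro]
  refine ⟨by omega, by simp at hl; omega, ?_, by simp⟩
  have : (A :: (u ++ b :: q)).take (u.length + 2) = A :: (u ++ [b]) := by
    rw [List.take_succ_cons, List.take_length_add_append]; simp
  rw [Zr, this]
  obtain ⟨h1, h2, ⟨rfl, h3⟩ | ⟨rfl, h3⟩⟩ := bump_cases hb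
  · left; simp; omega
  · right; simp; omega

lemma key {n z} (h : IsKrewerasWord n z) (hn : 1 ≤ n) (r : ℕ) (hr : r + 1 ≤ 3 * n)
    (hk : kiota (pro^[r] z) + r = 3 * n) : kiota (evac n z) + r = 3 * n := by
  have hr' := isK_iter h hn r
  obtain ⟨g1, g2, g3, g4⟩ := kiota_range hr' hn
  rw [← Function.iterate_succ_apply' (f := pro)] at g4
  set t := kiota (pro^[r] z) with ht
  have hE := EV hn (3 * n - 1) h (by omega)
  have hev : IsKrewerasWord n (evac n z) := evacAux_isK h
  rw [kiota_eq (i := t) (by omega) (by rw [hev.1]; omega) ?_ ?_]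
  · exact hk
  · have := hE t r (by omega)
    unfold Zr at *
    unfold evac
    rw [this.1, this.2]
    exact g3
  · intro ℓ h1 h2 hz
    obtain ⟨a1, a2⟩ := hE ℓ (3 * n - ℓ) (by omega)
    unfold Zr evac at hz
    rw [a1, a2] at hz
    have e : 3 * n - ℓ = (3 * n - ℓ - (r + 1)) + (r + 1) := by omega
    have hA : (pro^[3 * n - ℓ] z)[ℓ - 1]? = some A := by
      rw [e, Function.iterate_add_apply]
      refine iter_shiftA (isK_iter h hn _) hn _ _ ?_
      rw [← g4]; congr 1; omega
    obtain ⟨-, -, -, k3, k4⟩ := (isK_iff _ _).1 (isK_iter h hn (3 * n - ℓ))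
    have et : (pro^[3 * n - ℓ] z).take ℓ = (pro^[3 * n - ℓ] z).take (ℓ - 1) ++ [A] := by
      obtain ⟨m, rfl⟩ := Nat.exists_eq_add_of_le' h1
      rw [List.take_add_one]
      simp only [Nat.add_sub_cancel] at hA ⊢
      rw [hA]; rfl
    have b1 := (LX_iff _ _).1 k3 (ℓ - 1)
    have b2 := (LY_iff _ _).1 k4 (ℓ - 1)
    rw [et] at hz
    simp at hz
    omega

lemma kiota_neg (w) : kiota (neg w) = kiota w := by
  have key : ∀ (w : List KLetter) (k : ℕ), (decide (1 ≤ k) &&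
      (((w.take k).count A == (w.take k).count B) ||
       ((w.take k).count A == (w.take k).count C))) = decide (1 ≤ k ∧ (X (w.take k) = 0 ∨ Y (w.take k) = 0)) := by
    intro w k
    rw [Bool.eq_iff_iff]
    simp only [X_count, Y_count, Bool.and_eq_true, decide_eq_true_eq, Bool.or_eq_true,
      beq_iff_eq]
    omega
  unfold kiota
  simp only [key, neg_length]
  simp only [neg_take, X_neg, Y_neg, or_comm]

lemma kiota_period {n w} (h : IsKrewerasWord n w) (hn : 1 ≤ n) (k : ℕ) :
    kiota (pro^[k + 3 * n] w) = kiota (pro^[k] w) := by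
  have hK := (isK_iff _ _).1 h
  rw [Function.iterate_add_apply, proN n w hK.2 hK.1, iter_neg hK.2 (isK_ne h hn), kiota_neg]

lemma pro2N {n w} (h : IsKrewerasWord n w) (hn : 1 ≤ n) : pro^[3 * n + 3 * n] w = w := by
  have hK := (isK_iff _ _).1 h
  rw [Function.iterate_add_apply, proN n w hK.2 hK.1, iter_neg hK.2 (isK_ne h hn),
    proN n w hK.2 hK.1, neg_neg']

end KW


/-- `σ_{evac(w)} = rc(σ_w⁻¹)`: for every `i ∈ {1, …, 3n}`, with `j = σ_w⁻¹(3n+1-i)`,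
we have `σ_{evac(w)}(i) = 3n + 1 - j`. -/
theorem ksigma_evac (n : ℕ) (w : List KLetter) (hw : IsKrewerasWord n w) :
    ∀ i j : ℕ, 1 ≤ i → i ≤ 3 * n → 1 ≤ j → j ≤ 3 * n →
      ksigma n w j = 3 * n + 1 - i →
      ksigma n (evac n w) i = 3 * n + 1 - j := by
  intro i j hi1 hi2 hj1 hj2 hs
  have hn : 1 ≤ n := by omega
  obtain ⟨i, rfl⟩ := Nat.exists_eq_add_of_le' hi1
  obtain ⟨j, rfl⟩ := Nat.exists_eq_add_of_le' hj1
  unfold ksigma at *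
  simp only [Nat.add_sub_cancel] at *
  obtain ⟨g1, g2, -, -⟩ := KW.kiota_range (KW.isK_iter hw hn j) hn
  -- the shifted word
  set z := pro^[3 * n + 3 * n - i] w with hz
  have hzK : IsKrewerasWord n z := KW.isK_iter hw hn _
  have hev : pro^[i] (evac n w) = evac n z := by
    have e : w = pro^[i] z := by
      rw [hz, ← Function.iterate_add_apply, Nat.add_sub_cancel' (by omega), KW.pro2N hw hn]
    conv_lhs => rw [e]
    exact KW.iter_evac_iter hzK hn i
  rw [hev]
  set t := kiota (pro^[j] w) with ht
  have hcases : t + (j + 1) - 2 = 3 * n - 1 - i ∨ t + (j + 1) - 2 = 3 * n - 1 - i + 3 * n := by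
    have hlt : t + (j + 1) - 2 < 3 * n + 3 * n := by omega
    by_cases hc : t + (j + 1) - 2 < 3 * n
    · rw [Nat.mod_eq_of_lt hc] at hs; omega
    · rw [Nat.mod_eq_sub_mod (by omega), Nat.mod_eq_of_lt (by omega)] at hs; omega
  rcases hcases with hc | hc
  · -- r = j + i
    have hk : kiota (pro^[j + i] z) = t := by
      rw [hz, ← Function.iterate_add_apply]
      have : j + i + (3 * n + 3 * n - i) = j + 3 * n + 3 * n := by omega
      rw [this, KW.kiota_period hw hn, KW.kiota_period hw hn]
    have := KW.key hzK hn (j + i) (by omega) (by omega)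
    have e : kiota (evac n z) + (i + 1) - 2 = 3 * n - j - 1 := by omega
    rw [e, Nat.mod_eq_of_lt (by omega)]; omega
  · have hk : kiota (pro^[j + i - 3 * n] z) = t := by
      rw [hz, ← Function.iterate_add_apply]
      have : j + i - 3 * n + (3 * n + 3 * n - i) = j + 3 * n := by omega
      rw [this, KW.kiota_period hw hn]
    have := KW.key hzK hn (j + i - 3 * n) (by omega) (by omega)
    have e : kiota (evac n z) + (i + 1) - 2 = (3 * n - j - 1) + 3 * n := by omega
    rw [e, Nat.add_mod_right, Nat.mod_eq_of_lt (by omega)]; omega
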